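/- arXiv:2208.12182 — 3 statements merged into one kernel-verified Lean document; each statement's English description precedes it below -/
import Mathlib

section
/- Let N be a positive integer and let x_1,…,x_N be real numbers. Define f(x) = (1/N) ∑_{i=1}^{N} (1/2) · 𝟙_{[x_i − 1, x_i + 1]}(x). Then ∫_ℝ f(x)² dx ≥ 1/(2N), with equality if and only if |x_i − x_j| ≥ 2 for all i ≠ j. -/
open Real MeasureTheory Finset

lemma prod_ind (a b : ℝ) :
    (fun y : ℝ => Set.indicator (Set.Icc (a - 1) (a + 1)) (fun _ => (1 : ℝ)) y *
      Set.indicator (Set.Icc (b - 1) (b + 1)) (fun _ => (1 : ℝ)) y) =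
    Set.indicator (Set.Icc (max (a - 1) (b - 1)) (min (a + 1) (b + 1))) (fun _ => (1 : ℝ)) := by
  funext y
  rw [← Set.Icc_inter_Icc, ← Set.inter_indicator_mul (fun _ => (1:ℝ)) (fun _ => (1:ℝ))]
  simp

lemma prod_integrable (a b : ℝ) :
    Integrable (fun y : ℝ => Set.indicator (Set.Icc (a - 1) (a + 1)) (fun _ => (1 : ℝ)) y *
      Set.indicator (Set.Icc (b - 1) (b + 1)) (fun _ => (1 : ℝ)) y) := by
  rw [prod_ind, integrable_indicator_iff measurableSet_Icc]
  exact integrableOn_const (by simp)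

lemma prod_integral (a b : ℝ) :
    ∫ y : ℝ, Set.indicator (Set.Icc (a - 1) (a + 1)) (fun _ => (1 : ℝ)) y *
      Set.indicator (Set.Icc (b - 1) (b + 1)) (fun _ => (1 : ℝ)) y = max (2 - |a - b|) 0 := by
  rw [prod_ind, integral_indicator measurableSet_Icc]
  simp only [integral_const, MeasurableSet.univ, measureReal_restrict_apply, Set.univ_inter,
    smul_eq_mul, mul_one, Real.volume_real_Icc]
  congr 1
  rcases le_total a b with h | h
  · rw [max_eq_right (by linarith), min_eq_left (by linarith), abs_of_nonpos (by linarith)]; ring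
  · rw [max_eq_left (by linarith), min_eq_right (by linarith), abs_of_nonneg (by linarith)]; ring

lemma full_integral (N : ℕ) (x : Fin N → ℝ) :
    ∫ y : ℝ, ((1 / N : ℝ) * ∑ i, (1 / 2 : ℝ) *
        Set.indicator (Set.Icc (x i - 1) (x i + 1)) (fun _ => (1 : ℝ)) y) ^ 2 =
    (1 / (4 * N ^ 2) : ℝ) * ∑ i, ∑ j, max (2 - |x i - x j|) 0 := by
  have h : ∀ y : ℝ, ((1 / N : ℝ) * ∑ i, (1 / 2 : ℝ) *
        Set.indicator (Set.Icc (x i - 1) (x i + 1)) (fun _ => (1 : ℝ)) y) ^ 2 =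
      (1 / (4 * N ^ 2) : ℝ) * ∑ i, ∑ j,
        Set.indicator (Set.Icc (x i - 1) (x i + 1)) (fun _ => (1 : ℝ)) y *
        Set.indicator (Set.Icc (x j - 1) (x j + 1)) (fun _ => (1 : ℝ)) y := by
    intro y
    rw [← Finset.mul_sum, ← Finset.sum_mul_sum]
    ring
  simp_rw [h]
  rw [integral_const_mul, integral_finsetSum]
  · congr 1
    refine Finset.sum_congr rfl fun i _ => ?_
    rw [integral_finsetSum]
    · exact Finset.sum_congr rfl fun j _ => prod_integral _ _
    · exact fun j _ => prod_integrable _ _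
  · exact fun i _ => integrable_finsetSum _ fun j _ => prod_integrable _ _

theorem stmt_16 (N : ℕ) (hN : 0 < N) (x : Fin N → ℝ) :
    (1 / (2 * N) : ℝ) ≤
      ∫ y : ℝ, ((1 / N : ℝ) * ∑ i, (1 / 2 : ℝ) *
        Set.indicator (Set.Icc (x i - 1) (x i + 1)) (fun _ => (1 : ℝ)) y) ^ 2 ∧
    ((∫ y : ℝ, ((1 / N : ℝ) * ∑ i, (1 / 2 : ℝ) *
        Set.indicator (Set.Icc (x i - 1) (x i + 1)) (fun _ => (1 : ℝ)) y) ^ 2)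
        = 1 / (2 * N) ↔ ∀ i j : Fin N, i ≠ j → 2 ≤ |x i - x j|) := by
  rw [full_integral]
  have hN' : (0 : ℝ) < N := by exact_mod_cast hN
  have hs : ∑ i, ∑ j, max (2 - |x i - x j|) 0 =
      2 * N + ∑ i, ∑ j ∈ univ.erase i, max (2 - |x i - x j|) 0 := by
    have : ∀ i, ∑ j, max (2 - |x i - x j|) 0 =
        2 + ∑ j ∈ univ.erase i, max (2 - |x i - x j|) 0 := by
      intro i
      rw [← Finset.add_sum_erase univ _ (mem_univ i)]
      simp
    simp_rw [this, Finset.sum_add_distrib]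
    simp [mul_comm]
  have hnn : ∀ i, 0 ≤ ∑ j ∈ univ.erase i, max (2 - |x i - x j|) 0 :=
    fun i => Finset.sum_nonneg fun j _ => le_max_right _ _
  have hz : (∑ i, ∑ j ∈ univ.erase i, max (2 - |x i - x j|) 0 = 0) ↔
      ∀ i j : Fin N, i ≠ j → 2 ≤ |x i - x j| := by
    rw [Finset.sum_eq_zero_iff_of_nonneg (fun i _ => hnn i)]
    refine forall_congr' fun i => ?_
    rw [Finset.sum_eq_zero_iff_of_nonneg (fun j _ => le_max_right _ _)]
    simp only [mem_univ, true_imp_iff, mem_erase, and_true, max_eq_right_iff, sub_nonpos]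
    exact forall_congr' fun j => by rw [ne_comm]
  have h0 := Finset.sum_nonneg (s := univ) (fun i _ => hnn i)
  rw [hs, ← hz]
  generalize (∑ i, ∑ j ∈ univ.erase i, max (2 - |x i - x j|) 0) = S at h0
  have e : (1 / (4 * N ^ 2) : ℝ) * (2 * N + S) = 1 / (2 * N) + S / (4 * N ^ 2) := by
    field_simp
    ring
  rw [e]
  refine ⟨le_add_of_nonneg_right (by positivity), ?_⟩
  rw [add_eq_left, div_eq_zero_iff]
  have : (4 * (N:ℝ) ^ 2) ≠ 0 := by positivity
  simp [hN.ne']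
end

section
/- For all c > 0 and δ > 0 there exists N such that for all n ≥ N and all families a : Fin n → ℝ of positive reals whose subset sums are 1-separated and whose maximum A = max_i a_i satisfies A² ≤ c · n^{−1/2} · ∑_{i=1}^{n} a_i², one has ∫_ℝ (F(x) − γ(x))² dx ≤ (1 + δ) · 2^{−n}, where F = h*μ is the smoothed random-walk density and γ is the comparison Gaussian density. -/
open Real MeasureTheory Finset

/-- The subset sums of the family `a` are 1-separated. -/
def SepSums {n : ℕ} (a : Fin n → ℝ) : Prop :=
  ∀ S T : Finset (Fin n), S ≠ T → 1 ≤ |∑ i ∈ S, a i - ∑ i ∈ T, a i|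

/-- The signed sum `S_ε = ∑ i, ε_i a_i` for a sign vector `ε` (encoded by booleans,
`true ↦ +1`, `false ↦ -1`). -/
def signedSum {n : ℕ} (a : Fin n → ℝ) (ε : Fin n → Bool) : ℝ :=
  ∑ i, if ε i then a i else -a i

/-- The smoothed random-walk density `F = h * μ`:
`F(x) = 2^{-n} ∑_{ε ∈ {−1,1}^n} (1/2)·𝟙_{[S_ε − 1, S_ε + 1]}(x)`. -/
noncomputable def smoothedDensity {n : ℕ} (a : Fin n → ℝ) (x : ℝ) : ℝ :=
  (1 / 2 ^ n) * ∑ ε : Fin n → Bool,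
    (1 / 2) * Set.indicator (Set.Icc (signedSum a ε - 1) (signedSum a ε + 1))
      (fun _ => (1 : ℝ)) x

/-- The comparison Gaussian density
`γ(x) = (2π ∑ a_i²)^{−1/2} · exp(−x²/(2 ∑ a_i²))`. -/
noncomputable def gaussianDensity {n : ℕ} (a : Fin n → ℝ) (x : ℝ) : ℝ :=
  (Real.sqrt (2 * π * ∑ i, (a i) ^ 2))⁻¹ *
    Real.exp (-x ^ 2 / (2 * ∑ i, (a i) ^ 2))

lemma aux_signed {n : ℕ} (a : Fin n → ℝ) (ε : Fin n → Bool) :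
    signedSum a ε = 2 * ∑ i ∈ univ.filter (fun i => ε i = true), a i - ∑ i, a i := by
  unfold signedSum
  rw [Finset.sum_filter, Finset.mul_sum, ← Finset.sum_sub_distrib]
  refine Finset.sum_congr rfl fun i _ => ?_
  split_ifs <;> ring

lemma aux_sep {n : ℕ} {a : Fin n → ℝ} (h : SepSums a) {ε η : Fin n → Bool} (hne : ε ≠ η) :
    2 ≤ |signedSum a ε - signedSum a η| := by
  have hST : univ.filter (fun i => ε i = true) ≠ univ.filter (fun i => η i = true) := by
    intro hh
    apply hne
    funext i
    have := Finset.ext_iff.1 hh i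
    simp only [Finset.mem_filter, Finset.mem_univ, true_and] at this
    exact Bool.eq_iff_iff.2 this
  have h1 := h _ _ hST
  rw [aux_signed, aux_signed]
  set X := ∑ i ∈ univ.filter (fun i => ε i = true), a i
  set Y := ∑ i ∈ univ.filter (fun i => η i = true), a i
  have : 2 * X - ∑ i, a i - (2 * Y - ∑ i, a i) = 2 * (X - Y) := by ring
  rw [this, abs_mul, abs_two]
  linarith

lemma aux_sumsq {n : ℕ} (a : Fin n → ℝ) :
    ∑ ε : Fin n → Bool, (signedSum a ε) ^ 2 = 2 ^ n * ∑ i, a i ^ 2 := by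
  have h1 : ∀ ε : Fin n → Bool, (signedSum a ε) ^ 2 =
      ∑ i, ∑ j, (if ε i then a i else -a i) * (if ε j then a j else -a j) := by
    intro ε
    rw [signedSum, sq, Finset.sum_mul_sum]
  simp_rw [h1]
  rw [Finset.sum_comm, Finset.mul_sum]
  refine Finset.sum_congr rfl fun i _ => ?_
  rw [Finset.sum_comm, Finset.sum_eq_single i]
  · have : ∀ ε : Fin n → Bool,
        (if ε i then a i else -a i) * (if ε i then a i else -a i) = a i ^ 2 := by
      intro ε; split_ifs <;> ring
    simp [this]
  · intro j _ hji
    refine Finset.sum_involution (fun ε _ => Function.update ε i (!ε i)) ?_ ?_ ?_ ?_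
    · intro ε _
      rw [Function.update_self, Function.update_of_ne hji]
      cases ε i <;> cases ε j <;> simp
    · intro ε _ _ hh
      have := congrFun hh i
      simp at this
    · intro ε _; exact Finset.mem_univ _
    · intro ε _
      simp
  · simp

/-- the unnormalised sum of indicators -/
noncomputable def auxG {n : ℕ} (a : Fin n → ℝ) (x : ℝ) : ℝ :=
  ∑ ε : Fin n → Bool, Set.indicator (Set.Icc (signedSum a ε - 1) (signedSum a ε + 1))
      (fun _ => (1 : ℝ)) x

lemma auxG_ae {n : ℕ} {a : Fin n → ℝ} (h : SepSums a) :
    ∀ᵐ x : ℝ, auxG a x = 0 ∨ auxG a x = 1 := by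
  have hfin : (Set.range (fun ε : Fin n → Bool => signedSum a ε + 1)).Finite := Set.finite_range _
  have hnull := hfin.measure_zero (volume : Measure ℝ)
  filter_upwards [measure_eq_zero_iff_ae_notMem.1 hnull] with x hx
  have hx' : ∀ ε, x ≠ signedSum a ε + 1 := fun ε hh => hx ⟨ε, hh.symm⟩
  by_cases hex : ∃ ε, x ∈ Set.Icc (signedSum a ε - 1) (signedSum a ε + 1)
  · right
    obtain ⟨ε, hε⟩ := hex
    unfold auxG
    rw [Finset.sum_eq_single ε]
    · simp [Set.indicator_of_mem hε]
    · intro η _ hne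
      apply Set.indicator_of_notMem
      intro hη
      have h2 := aux_sep h hne
      have e1 := lt_of_le_of_ne hε.2 (hx' ε)
      have e2 := lt_of_le_of_ne hη.2 (hx' η)
      have e3 := hε.1
      have e4 := hη.1
      rcases abs_cases (signedSum a η - signedSum a ε) with ⟨q, _⟩ | ⟨q, _⟩ <;> linarith
    · simp
  · left
    push Not at hex
    exact Finset.sum_eq_zero fun ε _ => Set.indicator_of_notMem (hex ε) _

lemma aux_intble (p q : ℝ) (f : ℝ → ℝ) (hf : Continuous f) :
    Integrable (fun x => f x * Set.indicator (Set.Icc p q) (fun _ => (1 : ℝ)) x) := by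
  have : (fun x => f x * Set.indicator (Set.Icc p q) (fun _ => (1 : ℝ)) x)
      = Set.indicator (Set.Icc p q) f := by
    funext x; by_cases hx : x ∈ Set.Icc p q <;> simp [Set.indicator, hx]
  rw [this, integrable_indicator_iff measurableSet_Icc]
  exact hf.integrableOn_Icc

lemma aux_intval (p q : ℝ) (hpq : p ≤ q) (f : ℝ → ℝ) :
    ∫ x, f x * Set.indicator (Set.Icc p q) (fun _ => (1 : ℝ)) x = ∫ x in p..q, f x := by
  have : (fun x => f x * Set.indicator (Set.Icc p q) (fun _ => (1 : ℝ)) x)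
      = Set.indicator (Set.Icc p q) f := by
    funext x; by_cases hx : x ∈ Set.Icc p q <;> simp [Set.indicator, hx]
  rw [this, integral_indicator measurableSet_Icc, integral_Icc_eq_integral_Ioc,
    intervalIntegral.integral_of_le hpq]

lemma auxG_intble {n : ℕ} (a : Fin n → ℝ) (f : ℝ → ℝ) (hf : Continuous f) :
    Integrable (fun x => f x * auxG a x) := by
  unfold auxG
  simp_rw [Finset.mul_sum]
  exact integrable_finsetSum _ fun ε _ => aux_intble _ _ f hf

lemma auxG_intval {n : ℕ} (a : Fin n → ℝ) (f : ℝ → ℝ) (hf : Continuous f) :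
    ∫ x, f x * auxG a x =
      ∑ ε : Fin n → Bool, ∫ x in (signedSum a ε - 1)..(signedSum a ε + 1), f x := by
  unfold auxG
  simp_rw [Finset.mul_sum]
  rw [integral_finsetSum _ fun ε _ => aux_intble _ _ f hf]
  exact Finset.sum_congr rfl fun ε _ => aux_intval _ _ (by linarith) f

lemma aux_quad (p q R : ℝ) : ∫ x in p..q, (x ^ 2 - R ^ 2) =
    (q ^ 3 - p ^ 3) / 3 - (q - p) * R ^ 2 := by
  rw [intervalIntegral.integral_sub (by simp) (by simp), integral_pow]
  simp
  norm_num

lemma aux_var {n : ℕ} {a : Fin n → ℝ} (h : SepSums a) :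
    ((2 : ℝ) ^ n) ^ 2 - 1 ≤ 3 * ∑ i, a i ^ 2 := by
  set R : ℝ := 2 ^ n with hR
  have hRpos : 0 < R := by positivity
  have hc : Continuous (fun x : ℝ => x ^ 2 - R ^ 2) := by fun_prop
  have hle : ∫ x, (x ^ 2 - R ^ 2) * Set.indicator (Set.Icc (-R) R) (fun _ => (1 : ℝ)) x ≤
      ∫ x, (x ^ 2 - R ^ 2) * auxG a x := by
    refine integral_mono_ae (aux_intble _ _ _ hc) (auxG_intble a _ hc) ?_
    filter_upwards [auxG_ae h] with x hx
    by_cases hm : x ∈ Set.Icc (-R) R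
    · have : x ^ 2 ≤ R ^ 2 := sq_le_sq' hm.1 hm.2
      rw [Set.indicator_of_mem hm]
      rcases hx with hx | hx <;> rw [hx] <;> linarith
    · have : R ^ 2 ≤ x ^ 2 := by
        by_contra hlt
        push Not at hlt
        exact hm (abs_le.1 (abs_le_of_sq_le_sq hlt.le hRpos.le))
      rw [Set.indicator_of_notMem hm]
      rcases hx with hx | hx <;> rw [hx] <;> linarith
  rw [aux_intval _ _ (by linarith), auxG_intval a _ hc, aux_quad] at hle
  simp_rw [aux_quad] at hle
  have e : ∀ ε : Fin n → Bool,
      ((signedSum a ε + 1) ^ 3 - (signedSum a ε - 1) ^ 3) / 3 -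
        (signedSum a ε + 1 - (signedSum a ε - 1)) * R ^ 2
      = 2 * (signedSum a ε) ^ 2 + (2 / 3 - 2 * R ^ 2) := by intro ε; ring
  simp_rw [e] at hle
  rw [Finset.sum_add_distrib, ← Finset.mul_sum, aux_sumsq] at hle
  simp only [Finset.sum_const, Finset.card_univ, Fintype.card_fun, Fintype.card_bool,
    Fintype.card_fin, nsmul_eq_mul, Nat.cast_pow, Nat.cast_ofNat] at hle
  rw [← hR] at hle
  have : R * (R ^ 2 - 1) ≤ R * (3 * ∑ i, a i ^ 2) := by nlinarith
  exact le_of_mul_le_mul_left this hRpos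

theorem stmt_17 (c δ : ℝ) (hc : 0 < c) (hδ : 0 < δ) :
    ∃ N : ℕ, ∀ n : ℕ, N ≤ n → ∀ a : Fin n → ℝ, (∀ i, 0 < a i) →
      SepSums a → ∀ A : ℝ, IsGreatest (Set.range a) A →
      A ^ 2 ≤ c * (n : ℝ) ^ (-(1/2) : ℝ) * ∑ i, (a i) ^ 2 →
      (∫ x : ℝ, (smoothedDensity a x - gaussianDensity a x) ^ 2) ≤
        (1 + δ) * 2 ^ (-(n : ℝ)) := by
  refine ⟨3, fun n hn a _ hsep A _ _ => ?_⟩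
  have hvar := aux_var hsep
  set s : ℝ := ∑ i, a i ^ 2 with hs
  have hR8 : (8 : ℝ) ≤ 2 ^ n := by
    calc (8 : ℝ) = 2 ^ 3 := by norm_num
      _ ≤ 2 ^ n := pow_le_pow_right₀ (by norm_num) hn
  have h2 : (2 : ℝ) ^ (-(n : ℝ)) = ((2 : ℝ) ^ n)⁻¹ := by
    rw [Real.rpow_neg (by norm_num), Real.rpow_natCast]
  rw [h2]
  have hF : ∀ x, smoothedDensity a x = (2 * 2 ^ n)⁻¹ * auxG a x := by
    intro x
    unfold smoothedDensity auxG
    rw [← Finset.mul_sum]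
    field_simp
  have hGint := auxG_intble a (fun _ => ((2 * (2 : ℝ) ^ n)⁻¹) ^ 2) continuous_const
  have hGval := auxG_intval a (fun _ => ((2 * (2 : ℝ) ^ n)⁻¹) ^ 2) continuous_const
  set R : ℝ := 2 ^ n with hR
  have hRpos : 0 < R := by linarith
  have hspos : 0 < s := by nlinarith
  have hg : ∀ x, gaussianDensity a x ^ 2 = (2 * π * s)⁻¹ * Real.exp (-s⁻¹ * x ^ 2) := by
    intro x
    unfold gaussianDensity
    rw [← hs, mul_pow, inv_pow, Real.sq_sqrt (by positivity), ← Real.exp_nat_mul]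
    congr 2
    field_simp
    push_cast
    ring
  have hgint : Integrable (fun x => (2 * π * s)⁻¹ * Real.exp (-s⁻¹ * x ^ 2)) :=
    (integrable_exp_neg_mul_sq (inv_pos.2 hspos)).const_mul _
  have hmain : (∫ x : ℝ, (smoothedDensity a x - gaussianDensity a x) ^ 2) ≤
      ∫ x : ℝ, (((2 * R)⁻¹) ^ 2 * auxG a x + (2 * π * s)⁻¹ * Real.exp (-s⁻¹ * x ^ 2)) := by
    refine integral_mono_of_nonneg (Filter.Eventually.of_forall fun x => sq_nonneg _)
      (hGint.add hgint) ?_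
    filter_upwards [auxG_ae hsep] with x hx
    have hgn : 0 ≤ gaussianDensity a x := by unfold gaussianDensity; positivity
    show (smoothedDensity a x - gaussianDensity a x) ^ 2 ≤ _
    rw [← hg, hF]
    have hi : 0 < (2 * R)⁻¹ := by positivity
    rcases hx with hx | hx <;> rw [hx] <;> nlinarith [mul_nonneg hi.le hgn]
  rw [integral_add hGint hgint, hGval, integral_const_mul, integral_gaussian] at hmain
  simp only [intervalIntegral.integral_const, Finset.sum_sub_distrib, Finset.sum_const,
    Finset.card_univ, Fintype.card_fun, Fintype.card_bool,
    Fintype.card_fin, nsmul_eq_mul, Nat.cast_pow, Nat.cast_ofNat, smul_eq_mul, ← hR,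
    add_sub_sub_cancel] at hmain
  have hpi := Real.pi_gt_d2
  have hπs : R ≤ √(π * s) := by
    apply Real.le_sqrt_of_sq_le
    nlinarith
  have hq : √(π / s⁻¹) = √(π * s) := by rw [div_inv_eq_mul]
  have hsq : √(π * s) ^ 2 = π * s := Real.sq_sqrt (by positivity)
  have hgv : (2 * π * s)⁻¹ * √(π / s⁻¹) ≤ (2 * R)⁻¹ := by
    rw [hq, mul_assoc]
    have hp : 0 < √(π * s) := by linarith
    have : (2 * √(π * s) ^ 2)⁻¹ * √(π * s) = (2 * √(π * s))⁻¹ := by field_simp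
    rw [hsq] at this
    rw [this]
    gcongr
  have hfv : R * ((1 + 1) * ((2 * R)⁻¹) ^ 2) = (2 * R)⁻¹ := by field_simp; norm_num
  have hsum : (2 * R)⁻¹ + (2 * R)⁻¹ = R⁻¹ := by field_simp; norm_num
  have hRi : 0 < R⁻¹ := by positivity
  have := mul_pos hδ hRi
  rw [hfv] at hmain
  linarith
end

section
/- For all c > 0, ε > 0 and δ > 0 there exists N such that for all n ≥ N and all families a : Fin n → ℝ of positive reals whose maximum A = max_i a_i satisfies A² ≤ c · n^{−2/3 − ε} · ∑_{i=1}^{n} a_i², the distribution μ = 2^{−n} ∑_{ε ∈ {−1,1}^n} δ_{S_ε} of the random walk satisfies sup over all real t of | μ((−∞, t]) − ∫_{−∞}^{t} γ(y) dy | ≤ δ, where γ is the comparison Gaussian density; equivalently, 2^{−n} · #{ε ∈ {−1,1}^n : S_ε ≤ t} differs from ∫_{−∞}^{t} γ(y) dy by at most δ for every t. -/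
open Real MeasureTheory Finset

open Filter Topology ProbabilityTheory in
lemma cdf_unif_aux (μ : ℕ → ProbabilityMeasure ℝ) (ν : ProbabilityMeasure ℝ)
    [NullSingletonClass (ν : Measure ℝ)] (h : Tendsto μ atTop (𝓝 ν)) (s : ℕ → ℝ) (δ : ℝ) (hδ : 0 < δ) :
    ∃ k, |(μ k : Measure ℝ).real (Set.Iic (s k)) - (ν : Measure ℝ).real (Set.Iic (s k))| ≤ δ := by
  have hpt : ∀ u : ℝ, Tendsto (fun k => cdf (μ k : Measure ℝ) u) atTop
      (𝓝 (cdf (ν : Measure ℝ) u)) := by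
    intro u
    simp only [cdf_eq_real]
    have := ProbabilityMeasure.tendsto_measure_of_null_frontier_of_tendsto' h
      (E := Set.Iic u) (by rw [frontier_Iic]; simp)
    exact (ENNReal.tendsto_toReal (measure_ne_top _ _)).comp this
  simp only [← cdf_eq_real]
  obtain ⟨g, hg⟩ : ∃ g : Ultrafilter ℕ, (g : Filter ℕ) ≤ atTop := Ultrafilter.exists_le _
  have hc := (isCompact_univ (X := EReal)).ultrafilter_le_nhds
    (g.map (fun k => (s k : EReal))) (by simp)
  obtain ⟨L, -, hL⟩ := hc
  have hL : Tendsto (fun k => (s k : EReal)) g (𝓝 L) := hL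
  have hlow : ∀ u : ℝ, (u : EReal) < L → ∀ᶠ k in (g : Filter ℕ),
      cdf (ν : Measure ℝ) u - δ / 4 ≤ cdf (μ k : Measure ℝ) (s k) ∧
      cdf (ν : Measure ℝ) u ≤ cdf (ν : Measure ℝ) (s k) := by
    intro u hu
    have h1 := hL.eventually (lt_mem_nhds hu)
    have h2 := ((hpt u).mono_left hg).eventually
      (lt_mem_nhds (show cdf (ν : Measure ℝ) u - δ / 4 < _ by linarith))
    filter_upwards [h1, h2] with k h1 h2
    have h1 : u ≤ s k := by exact_mod_cast h1.le
    exact ⟨h2.le.trans (monotone_cdf _ h1), monotone_cdf _ h1⟩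
  have hhigh : ∀ u : ℝ, L < (u : EReal) → ∀ᶠ k in (g : Filter ℕ),
      cdf (μ k : Measure ℝ) (s k) ≤ cdf (ν : Measure ℝ) u + δ / 4 ∧
      cdf (ν : Measure ℝ) (s k) ≤ cdf (ν : Measure ℝ) u := by
    intro u hu
    have h1 := hL.eventually (gt_mem_nhds hu)
    have h2 := ((hpt u).mono_left hg).eventually
      (gt_mem_nhds (show _ < cdf (ν : Measure ℝ) u + δ / 4 by linarith))
    filter_upwards [h1, h2] with k h1 h2
    have h1 : s k ≤ u := by exact_mod_cast h1.le
    exact ⟨(monotone_cdf _ h1).trans h2.le, monotone_cdf _ h1⟩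
  induction L with
  | bot =>
    obtain ⟨v, hv⟩ := ((tendsto_cdf_atBot (ν : Measure ℝ)).eventually
      (gt_mem_nhds (show (0 : ℝ) < δ / 2 by linarith))).exists
    obtain ⟨k, hk1, hk2⟩ := (hhigh v (EReal.bot_lt_coe v)).exists
    refine ⟨k, abs_le.2 ⟨?_, ?_⟩⟩ <;>
      linarith [cdf_nonneg (μ k : Measure ℝ) (s k), cdf_nonneg (ν : Measure ℝ) (s k)]
  | top =>
    obtain ⟨v, hv⟩ := ((tendsto_cdf_atTop (ν : Measure ℝ)).eventually
      (lt_mem_nhds (show 1 - δ / 2 < (1 : ℝ) by linarith))).exists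
    obtain ⟨k, hk1, hk2⟩ := (hlow v (EReal.coe_lt_top v)).exists
    refine ⟨k, abs_le.2 ⟨?_, ?_⟩⟩ <;>
      linarith [cdf_le_one (μ k : Measure ℝ) (s k), cdf_le_one (ν : Measure ℝ) (s k)]
  | coe x =>
    have hcont : ContinuousAt (cdf (ν : Measure ℝ)) x := by
      rw [(cdf (ν : Measure ℝ)).mono.continuousAt_iff_leftLim_eq_rightLim,
        StieltjesFunction.rightLim_eq]
      have h0 := (cdf (ν : Measure ℝ)).measure_singleton x
      rw [measure_cdf, measure_singleton] at h0
      have := ENNReal.ofReal_eq_zero.1 h0.symm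
      exact le_antisymm ((cdf (ν : Measure ℝ)).mono.leftLim_le le_rfl) (by linarith)
    have e1 := hcont.eventually
      (lt_mem_nhds (show cdf (ν : Measure ℝ) x - δ / 4 < _ by linarith))
    have e2 := hcont.eventually
      (gt_mem_nhds (show _ < cdf (ν : Measure ℝ) x + δ / 4 by linarith))
    obtain ⟨r, hr, hb⟩ := Metric.eventually_nhds_iff.1 (e1.and e2)
    have m1 := (@hb (x - r / 2) (by rw [Real.dist_eq, abs_lt]; constructor <;> linarith)).1
    have m2 := (@hb (x + r / 2) (by rw [Real.dist_eq, abs_lt]; constructor <;> linarith)).2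
    obtain ⟨k, ⟨k1, k2⟩, k3, k4⟩ := ((hlow (x - r / 2) (by
      exact_mod_cast (by linarith : x - r / 2 < x))).and
      (hhigh (x + r / 2) (by exact_mod_cast (by linarith : x < x + r / 2)))).exists
    refine ⟨k, abs_le.2 ⟨?_, ?_⟩⟩ <;> linarith

/-- Law of the walk. -/
noncomputable def walkMeasure {n : ℕ} (b : Fin n → ℝ) : Measure ℝ :=
  ((2 : ENNReal) ^ n)⁻¹ • ∑ η : Fin n → Bool, Measure.dirac (signedSum b η)

lemma walkMeasure_Iic {n : ℕ} (b : Fin n → ℝ) (t : ℝ) :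
    (walkMeasure b).real (Set.Iic t) =
      ((Finset.univ.filter fun η : Fin n → Bool => signedSum b η ≤ t).card : ℝ) / 2 ^ n := by
  simp [walkMeasure, measureReal_def, Set.indicator_apply, Finset.sum_boole, div_eq_inv_mul]

instance walkMeasure_prob {n : ℕ} (b : Fin n → ℝ) : IsProbabilityMeasure (walkMeasure b) := by
  constructor
  simp [walkMeasure]
  exact ENNReal.inv_mul_cancel (by simp) (by simp)

lemma walkMeasure_charFun {n : ℕ} (b : Fin n → ℝ) (t : ℝ) :
    charFun (walkMeasure b) t = ((∏ i, Real.cos (t * b i) : ℝ) : ℂ) := by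
  rw [charFun_apply_real, walkMeasure, integral_smul_measure,
    integral_finsetSum_measure (fun i _ => integrable_dirac (by simp [enorm_lt_top]))]
  simp only [integral_dirac]
  have h1 : ∀ η : Fin n → Bool, Complex.exp (t * (signedSum b η : ℝ) * Complex.I) =
      ∏ i, Complex.exp ((if η i then 1 else -1) * (t * b i) * Complex.I) := by
    intro η
    rw [← Complex.exp_sum]
    congr 1
    simp only [signedSum, Complex.ofReal_sum, Finset.mul_sum, Finset.sum_mul]
    refine Finset.sum_congr rfl fun i _ => ?_
    split_ifs <;> push_cast <;> ring
  have h2 := Finset.prod_univ_sum (fun _ : Fin n => (Finset.univ : Finset Bool))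
    (fun i e => Complex.exp ((if e then 1 else -1) * (t * b i) * Complex.I))
  rw [Fintype.piFinset_univ] at h2
  simp only [h1]
  rw [← h2]
  have h3 : ∀ i, ∑ e : Bool, Complex.exp ((if e then 1 else -1) * (t * b i) * Complex.I) =
      2 * Complex.cos (t * b i) := by
    intro i
    rw [Complex.two_cos]
    simp
  simp only [h3, Finset.prod_mul_distrib]
  simp

lemma abs_prod_sub_prod_le_aux {ι : Type*} (s : Finset ι) (f g : ι → ℝ)
    (hf : ∀ i, |f i| ≤ 1) (hg : ∀ i, |g i| ≤ 1) :
    |∏ i ∈ s, f i - ∏ i ∈ s, g i| ≤ ∑ i ∈ s, |f i - g i| := by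
  classical
  induction s using Finset.induction_on with
  | empty => simp
  | insert a s ha ih =>
    rw [Finset.prod_insert ha, Finset.prod_insert ha, Finset.sum_insert ha]
    have e : f a * ∏ i ∈ s, f i - g a * ∏ i ∈ s, g i =
      (f a - g a) * ∏ i ∈ s, f i + g a * (∏ i ∈ s, f i - ∏ i ∈ s, g i) := by ring
    have hp : |∏ i ∈ s, f i| ≤ 1 := by
      rw [Finset.abs_prod]
      exact Finset.prod_le_one (fun _ _ => abs_nonneg _) (fun i _ => hf i)
    rw [e]
    refine (abs_add_le _ _).trans ?_
    rw [abs_mul, abs_mul]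
    exact add_le_add (mul_le_of_le_one_right (abs_nonneg _) hp)
      ((mul_le_of_le_one_left (abs_nonneg _) (hg a)).trans ih)

lemma cos_sub_exp_aux (x : ℝ) (hx : |x| ≤ 1) : |Real.cos x - Real.exp (-(x ^ 2 / 2))| ≤ x ^ 4 := by
  have h1 := Real.cos_bound hx
  have hx2 : x ^ 2 ≤ 1 := by rw [← sq_abs]; exact pow_le_one₀ (abs_nonneg _) hx
  have h2 := Real.abs_exp_sub_one_sub_id_le (x := -(x ^ 2 / 2)) (by
    rw [abs_neg, abs_of_nonneg (by positivity)]; linarith)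
  have h4 : |x| ^ 4 = x ^ 4 := by
    rw [← abs_pow, abs_of_nonneg (by positivity)]
  rw [h4] at h1
  have h5 : (-(x ^ 2 / 2)) ^ 2 = x ^ 4 / 4 := by ring
  rw [h5] at h2
  have h0 : 0 ≤ x ^ 4 := by positivity
  rw [abs_le] at *
  constructor <;> linarith

lemma cos_prod_aux {n : ℕ} (b : Fin n → ℝ) (hb : ∑ i, b i ^ 2 = 1) (η : ℝ)
    (hη : ∀ i, b i ^ 2 ≤ η) (t : ℝ) (ht : t ^ 2 * η ≤ 1) :
    |∏ i, Real.cos (t * b i) - Real.exp (-(t ^ 2 / 2))| ≤ t ^ 4 * η := by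
  have e : Real.exp (-(t ^ 2 / 2)) = ∏ i, Real.exp (-((t * b i) ^ 2 / 2)) := by
    rw [← Real.exp_sum]
    congr 1
    rw [Finset.sum_neg_distrib, ← Finset.sum_div]
    simp only [mul_pow]
    rw [← Finset.mul_sum, hb, mul_one]
  rw [e]
  refine (abs_prod_sub_prod_le_aux _ _ _ (fun i => Real.abs_cos_le_one _) (fun i => ?_)).trans ?_
  · rw [abs_of_pos (Real.exp_pos _), Real.exp_le_one_iff]
    have := sq_nonneg (t * b i)
    linarith
  calc _ ≤ ∑ i, (t * b i) ^ 4 := Finset.sum_le_sum fun i _ => cos_sub_exp_aux _ (by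
          rw [← sq_le_one_iff_abs_le_one, mul_pow]
          exact (mul_le_mul_of_nonneg_left (hη i) (sq_nonneg t)).trans ht)
    _ ≤ ∑ i, t ^ 4 * η * b i ^ 2 := Finset.sum_le_sum fun i _ => by
          have : (t * b i) ^ 4 = t ^ 4 * b i ^ 2 * b i ^ 2 := by ring
          rw [this]
          gcongr
          exact hη i
    _ = t ^ 4 * η := by rw [← Finset.mul_sum, hb, mul_one]

open ProbabilityTheory in
lemma gaussian_int_aux {n : ℕ} (a : Fin n → ℝ) (h : 0 < ∑ i, a i ^ 2) (t : ℝ) :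
    ∫ y in Set.Iic t, gaussianDensity a y =
      (gaussianReal 0 1).real (Set.Iic (t / √(∑ i, a i ^ 2))) := by
  set S := ∑ i, a i ^ 2 with hS
  have hs : 0 < √S := Real.sqrt_pos.2 h
  have hv : (S.toNNReal : NNReal) ≠ 0 := by simpa using h
  have e1 : ∀ y, gaussianDensity a y = gaussianPDFReal 0 S.toNNReal y := by
    intro y
    simp [gaussianDensity, gaussianPDFReal, ← hS, h.le]
  have h1 : (gaussianReal 0 S.toNNReal).real (Set.Iic t) =
      ∫ y in Set.Iic t, gaussianDensity a y := by
    simp only [e1]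
    rw [measureReal_def, gaussianReal_apply_eq_integral _ hv, ENNReal.toReal_ofReal]
    exact integral_nonneg fun y => gaussianPDFReal_nonneg _ _ _
  have h2 : (gaussianReal 0 1).map (√S * ·) = gaussianReal 0 S.toNNReal := by
    rw [gaussianReal_map_const_mul]
    congr 1
    · simp
    · ext
      simp [Real.sq_sqrt h.le, h.le]
  rw [← h1, ← h2, measureReal_def, measureReal_def,
    Measure.map_apply (by fun_prop) measurableSet_Iic]
  congr 2
  ext y
  simp [le_div_iff₀ hs, mul_comm]

lemma signedSum_div {n : ℕ} (a : Fin n → ℝ) (r : ℝ) (η : Fin n → Bool) :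
    signedSum (fun i => a i / r) η = signedSum a η / r := by
  simp only [signedSum, Finset.sum_div]
  refine Finset.sum_congr rfl fun i _ => ?_
  split_ifs <;> ring

open Filter Topology ProbabilityTheory in
theorem stmt_18 (c ε δ : ℝ) (hc : 0 < c) (hε : 0 < ε) (hδ : 0 < δ) :
    ∃ N : ℕ, ∀ n : ℕ, N ≤ n → ∀ a : Fin n → ℝ, (∀ i, 0 < a i) →
      ∀ A : ℝ, IsGreatest (Set.range a) A →
      A ^ 2 ≤ c * (n : ℝ) ^ (-(2/3 : ℝ) - ε) * ∑ i, (a i) ^ 2 →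
      ∀ t : ℝ,
        |((Finset.univ.filter fun η : Fin n → Bool => signedSum a η ≤ t).card : ℝ)
            / 2 ^ n - ∫ y in Set.Iic t, gaussianDensity a y| ≤ δ := by
  by_contra! hcon
  choose n hn a ha A hA hAb t ht using hcon
  have hS : ∀ k, 0 < ∑ i, a k i ^ 2 := by
    intro k
    obtain ⟨i, -⟩ := (hA k).1
    exact Finset.sum_pos (fun i _ => pow_pos (ha k i) 2) ⟨i, Finset.mem_univ _⟩
  let σ : ℕ → ℝ := fun k => √(∑ i, a k i ^ 2)
  have hσ : ∀ k, 0 < σ k := fun k => Real.sqrt_pos.2 (hS k)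
  have hσ2 : ∀ k, σ k ^ 2 = ∑ i, a k i ^ 2 := fun k => Real.sq_sqrt (hS k).le
  let b : ∀ k, Fin (n k) → ℝ := fun k i => a k i / σ k
  let η : ℕ → ℝ := fun k => c * (n k : ℝ) ^ (-(2/3 : ℝ) - ε)
  have hb : ∀ k, ∑ i, b k i ^ 2 = 1 := by
    intro k
    simp only [b, div_pow]
    rw [← Finset.sum_div, hσ2, div_self (hS k).ne']
  have hbη : ∀ k i, b k i ^ 2 ≤ η k := by
    intro k i
    simp only [b, div_pow]
    rw [div_le_iff₀ (pow_pos (hσ k) 2), hσ2]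
    refine le_trans ?_ (hAb k)
    exact pow_le_pow_left₀ (ha k i).le ((hA k).2 ⟨i, rfl⟩) 2
  have hn' : Tendsto n atTop atTop := tendsto_atTop_mono hn tendsto_id
  have hη : Tendsto η atTop (𝓝 0) := by
    have := ((tendsto_rpow_neg_atTop (show 0 < 2/3 + ε by linarith)).comp
      (tendsto_natCast_atTop_atTop.comp hn')).const_mul c
    rw [mul_zero] at this
    convert this using 3
    simp only [Function.comp]
    congr 1
    ring
  let μ : ℕ → ProbabilityMeasure ℝ := fun k => ⟨walkMeasure (b k), inferInstance⟩
  let ν : ProbabilityMeasure ℝ := ⟨gaussianReal 0 1, inferInstance⟩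
  have hν : NullSingletonClass (ν : Measure ℝ) := nullSingletonClass_gaussianReal (by simp)
  have hlim : Tendsto μ atTop (𝓝 ν) := by
    refine ProbabilityMeasure.tendsto_of_tendsto_charFun fun u => ?_
    change Tendsto (fun k => charFun (walkMeasure (b k)) u) atTop
      (𝓝 (charFun (gaussianReal 0 1) u))
    simp only [walkMeasure_charFun]
    have e : charFun (gaussianReal 0 1) u = ((Real.exp (-(u ^ 2 / 2)) : ℝ) : ℂ) := by
      rw [charFun_gaussianReal]
      push_cast
      congr 1
      simp
    rw [e]
    refine (Complex.continuous_ofReal.tendsto _).comp ?_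
    rw [tendsto_iff_dist_tendsto_zero]
    have z : Tendsto (fun k => u ^ 4 * η k) atTop (𝓝 0) := by
      simpa using hη.const_mul (u ^ 4)
    have z2 : Tendsto (fun k => u ^ 2 * η k) atTop (𝓝 0) := by
      simpa using hη.const_mul (u ^ 2)
    refine squeeze_zero' (.of_forall fun _ => dist_nonneg) ?_ z
    filter_upwards [z2.eventually (gt_mem_nhds one_pos)] with k hk
    exact cos_prod_aux (b k) (hb k) (η k) (hbη k) u hk.le
  obtain ⟨k, hk⟩ := cdf_unif_aux μ ν hlim (fun k => t k / σ k) δ hδ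
  refine absurd (ht k) (not_lt.2 ?_)
  have e1 := walkMeasure_Iic (b k) (t k / σ k)
  simp only [b, signedSum_div, div_le_div_iff_of_pos_right (hσ k)] at e1
  rw [gaussian_int_aux _ (hS k), ← e1]
  exact hk
end
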